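/- Characterization of harmonic Gauss map: in the setting of a minimal Lorentzian surface x(s,t) = α(s) + β(t) in null coordinates, for every point (s,t) one has ∂²ν/∂s∂t (s,t) = 0 if and only if both B(η₁(s,t), η₂(s,t)) = 0 and η₁(s,t) ∧ η₂(s,t) = 0 in Λ²(ℝ⁴). (That is, the Gauss map is harmonic, Δν = 0, exactly when the Gaussian curvature K = B(η₁,η₂)/m⁴ and the normal curvature both vanish.) -/

import Mathlib

/-!
Rescaling the tangent vectors `a = α'` and `b = β'` does not change the Gauss map. Near a point
`(s, t)`, rescale `a` so that `B (a u) (b t)` becomes constant, and `b` so that `B (a s) (b v)`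
becomes constant; the derivatives of the rescaled curves are then multiples of `η₁` and `η₂`, and
the mixed derivative of the Gauss map reduces to

`∂²ν/∂s∂t = -B(a, b)⁻¹ η₁ ∧ η₂ + B(a, b)⁻² B(η₁, η₂) a ∧ b`.

When `a` is null, `η₁` and `η₂` are both orthogonal to `a`, so that contracting with `a` kills
`η₁ ∧ η₂` but not `a ∧ b`. Hence the sum vanishes only if both terms do.
-/

noncomputable section

/-- The Minkowski bilinear form on `ℝ⁴ = Fin 4 → ℝ`:
`B(v,w) = -v₀w₀ + v₁w₁ + v₂w₂ + v₃w₃`. -/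
def B4 (v w : Fin 4 → ℝ) : ℝ :=
  -(v 0 * w 0) + v 1 * w 1 + v 2 * w 2 + v 3 * w 3

/-- The wedge product `v ∧ w`, modelled concretely as the antisymmetric array
`(i,j) ↦ vᵢwⱼ - vⱼwᵢ` (a faithful model of the second exterior power `Λ²(ℝ⁴)`). -/
def wedge (v w : Fin 4 → ℝ) : Fin 4 → Fin 4 → ℝ :=
  fun i j => v i * w j - v j * w i

/-- Partial derivative of a two-parameter map with respect to the first variable. -/
def pds {E : Type*} [NormedAddCommGroup E] [NormedSpace ℝ E]
    (x : ℝ → ℝ → E) (s t : ℝ) : E :=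
  deriv (fun u => x u t) s

/-- Partial derivative of a two-parameter map with respect to the second variable. -/
def pdt {E : Type*} [NormedAddCommGroup E] [NormedSpace ℝ E]
    (x : ℝ → ℝ → E) (s t : ℝ) : E :=
  deriv (fun u => x s u) t

/-- `m²(s,t) = -B(α'(s), β'(t))`, the conformal factor of the induced metric
`-m²(ds⊗dt + dt⊗ds)` of the minimal Lorentzian surface `x(s,t) = α(s) + β(t)`. -/
def msq (α β : ℝ → Fin 4 → ℝ) (s t : ℝ) : ℝ :=
  -B4 (deriv α s) (deriv β t)

/-- `η₁ = h(∂s,∂s)`: the component of `x_{ss} = α''` orthogonal to the tangent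
plane `span{α'(s), β'(t)}`. -/
def eta1 (α β : ℝ → Fin 4 → ℝ) (s t : ℝ) : Fin 4 → ℝ :=
  deriv (deriv α) s
    - (B4 (deriv (deriv α) s) (deriv β t) / B4 (deriv α s) (deriv β t)) • deriv α s

/-- `η₂ = h(∂t,∂t)`: the component of `x_{tt} = β''` orthogonal to the tangent
plane `span{α'(s), β'(t)}`. -/
def eta2 (α β : ℝ → Fin 4 → ℝ) (s t : ℝ) : Fin 4 → ℝ :=
  deriv (deriv β) t
    - (B4 (deriv (deriv β) t) (deriv α s) / B4 (deriv α s) (deriv β t)) • deriv β t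

/-- The Gauss map `ν = (1/m²)·(α'(s) ∧ β'(t))`, valued in (a model of) `Λ²(ℝ⁴)`. -/
def gaussMap (α β : ℝ → Fin 4 → ℝ) (s t : ℝ) : Fin 4 → Fin 4 → ℝ :=
  (1 / msq α β s t) • wedge (deriv α s) (deriv β t)

/-- The Laplace–Beltrami operator of the induced metric `-m²(ds⊗dt + dt⊗ds)`
(with the sign convention of the paper) acting on `Λ²(ℝ⁴)`-valued maps:
`Δξ = (2/m²)·∂²ξ/∂s∂t`. -/
def lap (α β : ℝ → Fin 4 → ℝ) (ξ : ℝ → ℝ → (Fin 4 → Fin 4 → ℝ)) (s t : ℝ) :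
    Fin 4 → Fin 4 → ℝ :=
  (2 / msq α β s t) • pds (pdt ξ) s t

open Filter Topology

section KerPart

variable {E : Type*} [NormedAddCommGroup E] [NormedSpace ℝ E]

/-- The component of `z` in the hyperplane `ker φ` along the vector `x`, where `φ x ≠ 0`. The
normal components `η₁` and `η₂` of `α''` and `β''` are of this form, `φ` being the `B`-product
with the other null tangent vector. -/
def kerPart (φ : StrongDual ℝ E) (x z : E) : E :=
  z - (φ z / φ x) • x

lemma apply_kerPart (φ : StrongDual ℝ E) {x : E} (hx : φ x ≠ 0) (z : E) :
    φ (kerPart φ x z) = 0 := by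
  simp [kerPart, hx]

lemma hasDerivAt_inv_apply_smul_self (φ : StrongDual ℝ E) {a : ℝ → E} {a' : E} {s : ℝ}
    (ha : HasDerivAt a a' s) (hφ : φ (a s) ≠ 0) :
    HasDerivAt (fun u => (φ (a u))⁻¹ • a u) ((φ (a s))⁻¹ • kerPart φ (a s) a') s := by
  have hφa : HasDerivAt (fun u => φ (a u)) (φ a') s := φ.hasFDerivAt.comp_hasDerivAt s ha
  refine ((hφa.fun_inv hφ).fun_smul ha).congr_deriv ?_
  rw [kerPart, smul_sub, smul_smul, sub_eq_add_neg, ← neg_smul]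
  congr 2
  field_simp

end KerPart

lemma pds_pdt_congr {E : Type*} [NormedAddCommGroup E] [NormedSpace ℝ E] {f g : ℝ → ℝ → E}
    {s t : ℝ} (h : ∀ᶠ u in 𝓝 s, ∀ᶠ v in 𝓝 t, f u v = g u v) :
    pds (pdt f) s t = pds (pdt g) s t :=
  EventuallyEq.deriv_eq <| h.mono fun _ hu => EventuallyEq.deriv_eq hu

section GaussBivector

variable {E F G : Type*} [NormedAddCommGroup E] [NormedSpace ℝ E]
  [NormedAddCommGroup F] [NormedSpace ℝ F] [NormedAddCommGroup G] [NormedSpace ℝ G]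
  (B : E →L[ℝ] F →L[ℝ] ℝ) (ω : E →L[ℝ] F →L[ℝ] G)

/-- The Gauss map as a function of the two tangent directions: the product `ω x y` (in geometry,
`x ∧ y`) divided by the conformal factor `-B x y`. -/
def gaussBivector (x : E) (y : F) : G :=
  (1 / -B x y) • ω x y

lemma gaussBivector_smul_smul {c d : ℝ} (hc : c ≠ 0) (hd : d ≠ 0) (x : E) (y : F) :
    gaussBivector B ω (c • x) (d • y) = gaussBivector B ω x y := by
  simp only [gaussBivector, map_smul, smul_apply, smul_smul, smul_eq_mul]
  congr 1
  field_simp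

lemma hasDerivAt_gaussBivector (x : E) {q : ℝ → F} {q' : F} {t : ℝ} (hq : HasDerivAt q q' t)
    (hB : B x (q t) ≠ 0) :
    HasDerivAt (fun v => gaussBivector B ω x (q v))
      ((1 / -B x (q t)) • ω x q' + (B x q' / B x (q t) ^ 2) • ω x (q t)) t := by
  have hBq : HasDerivAt (fun v => B x (q v)) (B x q') t :=
    (B x).hasFDerivAt.comp_hasDerivAt t hq
  have hωq : HasDerivAt (fun v => ω x (q v)) (ω x q') t :=
    (ω x).hasFDerivAt.comp_hasDerivAt t hq
  simp only [gaussBivector, one_div]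
  refine ((hBq.fun_neg.fun_inv (neg_ne_zero.mpr hB)).fun_smul hωq).congr_deriv ?_
  rw [neg_neg, neg_sq]

lemma pds_pdt_gaussBivector_of_eventually_const {p : ℝ → E} {q : ℝ → F} {p' : E} {q' : F}
    {s t k : ℝ} (hp : HasDerivAt p p' s) (hq : HasDerivAt q q' t) (hk : k ≠ 0)
    (hpk : ∀ᶠ u in 𝓝 s, B (p u) (q t) = k) (hq' : B (p s) q' = 0) :
    pds (pdt fun u v => gaussBivector B ω (p u) (q v)) s t =
      (1 / -k) • ω p' q' + (B p' q' / k ^ 2) • ω (p s) (q t) := by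
  have hpdt : (fun u => pdt (fun u v => gaussBivector B ω (p u) (q v)) u t) =ᶠ[𝓝 s]
      fun u => (1 / -k) • ω (p u) q' + (B (p u) q' / k ^ 2) • ω (p u) (q t) := by
    filter_upwards [hpk] with u hu
    rw [← hu]
    exact (hasDerivAt_gaussBivector B ω (p u) hq (hu ▸ hk)).deriv
  have hBp : HasDerivAt (fun u => B (p u) q') (B p' q') s :=
    (B.flip q').hasFDerivAt.comp_hasDerivAt s hp
  have hωp (y : F) : HasDerivAt (fun u => ω (p u) y) (ω p' y) s :=
    (ω.flip y).hasFDerivAt.comp_hasDerivAt s hp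
  refine hpdt.deriv_eq.trans <| HasDerivAt.deriv <| (((hωp q').fun_const_smul _).fun_add
    ((hBp.div_const (k ^ 2)).fun_smul (hωp (q t)))).congr_deriv ?_
  rw [hq', zero_div, zero_smul, zero_add]

theorem pds_pdt_gaussBivector {a : ℝ → E} {b : ℝ → F} {a' : E} {b' : F} {s t : ℝ}
    (ha : HasDerivAt a a' s) (hb : HasDerivAt b b' t) (hab : B (a s) (b t) ≠ 0) :
    pds (pdt fun u v => gaussBivector B ω (a u) (b v)) s t =
      (1 / -B (a s) (b t)) • ω (kerPart (B.flip (b t)) (a s) a') (kerPart (B (a s)) (b t) b') +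
      (B (kerPart (B.flip (b t)) (a s) a') (kerPart (B (a s)) (b t) b') / B (a s) (b t) ^ 2) •
        ω (a s) (b t) := by
  set c := B (a s) (b t) with hc
  have hau : ∀ᶠ u in 𝓝 s, B (a u) (b t) ≠ 0 :=
    ((B.flip (b t)).continuous.continuousAt.comp ha.continuousAt).eventually_ne hab
  have hbv : ∀ᶠ v in 𝓝 t, B (a s) (b v) ≠ 0 :=
    ((B (a s)).continuous.continuousAt.comp hb.continuousAt).eventually_ne hab
  let p (u : ℝ) : E := (B (a u) (b t))⁻¹ • a u
  let q (v : ℝ) : F := (B (a s) (b v))⁻¹ • b v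
  have hpq : ∀ᶠ u in 𝓝 s, ∀ᶠ v in 𝓝 t,
      gaussBivector B ω (a u) (b v) = gaussBivector B ω (p u) (q v) := by
    filter_upwards [hau] with u hu
    filter_upwards [hbv] with v hv
    exact (gaussBivector_smul_smul B ω (inv_ne_zero hu) (inv_ne_zero hv) _ _).symm
  have hp : HasDerivAt p (c⁻¹ • kerPart (B.flip (b t)) (a s) a') s :=
    hasDerivAt_inv_apply_smul_self (B.flip (b t)) ha hab
  have hq : HasDerivAt q (c⁻¹ • kerPart (B (a s)) (b t) b') t :=
    hasDerivAt_inv_apply_smul_self (B (a s)) hb hab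
  have hpc : ∀ᶠ u in 𝓝 s, B (p u) (q t) = c⁻¹ := by
    filter_upwards [hau] with u hu
    simp [p, q, hu, ← hc]
  have hq' : B (p s) (c⁻¹ • kerPart (B (a s)) (b t) b') = 0 := by
    simp [p, apply_kerPart (B (a s)) hab]
  rw [pds_pdt_congr hpq,
    pds_pdt_gaussBivector_of_eventually_const B ω hp hq (inv_ne_zero hab) hpc hq']
  simp only [p, q, ← hc, map_smul, smul_apply, smul_smul, smul_eq_mul]
  congr 2 <;> field_simp

end GaussBivector

lemma apply_deriv_eq_zero_of_eventually_const {E : Type*} [NormedAddCommGroup E] [NormedSpace ℝ E]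
    {B : E →L[ℝ] E →L[ℝ] ℝ} (hB : ∀ x y, B x y = B y x) {a : ℝ → E} {a' : E} {s k : ℝ}
    (ha : HasDerivAt a a' s) (hk : ∀ᶠ u in 𝓝 s, B (a u) (a u) = k) :
    B (a s) a' = 0 := by
  have hsum : B (a s) a' + B a' (a s) = 0 :=
    (B.hasDerivAt_of_bilinear (fun _ => ha) fun _ => ha).unique
      ((hasDerivAt_const s k).congr_of_eventuallyEq hk)
  rw [hB a'] at hsum
  linarith

lemma smul_add_smul_eq_zero_iff_of_map {K V W : Type*} [DivisionRing K] [AddCommGroup V]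
    [Module K V] [AddCommGroup W] [Module K W] (f : V →ₗ[K] W) {x y : V} (hx : f x = 0)
    (hy : f y ≠ 0) (c d : K) : c • x + d • y = 0 ↔ c • x = 0 ∧ d = 0 := by
  refine ⟨fun h => ?_, fun ⟨hc, hd⟩ => by rw [hc, hd, zero_smul, add_zero]⟩
  have hd : d = 0 := by simpa [hx, hy] using congrArg f h
  exact ⟨by simpa [hd] using h, hd⟩

section Wedge

variable {E G : Type*} [NormedAddCommGroup E] [NormedSpace ℝ E]
  [NormedAddCommGroup G] [NormedSpace ℝ G]

/-- The bilinear map `ω`, a stand-in for the exterior product `E × E → Λ²E`, admits interior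
products: contraction `v ∧ w ↦ φ(v) w - φ(w) v` with any functional `φ` is a well-defined linear
map on its target. This avoids the need for a norm on Mathlib's `⋀[ℝ]^2 E`. -/
def HasInteriorProducts (ω : E →L[ℝ] E →L[ℝ] G) : Prop :=
  ∀ φ : StrongDual ℝ E, ∃ ι : G →ₗ[ℝ] E, ∀ v w, ι (ω v w) = φ v • w - φ w • v

theorem harmonic_gaussMap_iff_general {B : E →L[ℝ] E →L[ℝ] ℝ} (hB : ∀ x y, B x y = B y x)
    {ω : E →L[ℝ] E →L[ℝ] G} (hω : HasInteriorProducts ω) {a b : ℝ → E} {a' b' : E} {s t : ℝ}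
    (ha : HasDerivAt a a' s) (hb : HasDerivAt b b' t)
    (hnull : ∀ᶠ u in 𝓝 s, B (a u) (a u) = 0) (hab : B (a s) (b t) ≠ 0) :
    pds (pdt fun u v => gaussBivector B ω (a u) (b v)) s t = 0 ↔
      B (kerPart (B.flip (b t)) (a s) a') (kerPart (B (a s)) (b t) b') = 0 ∧
        ω (kerPart (B.flip (b t)) (a s) a') (kerPart (B (a s)) (b t) b') = 0 := by
  obtain ⟨ι, hι⟩ := hω (B (a s))
  have haa : B (a s) (a s) = 0 := hnull.self_of_nhds
  have hη₁ : B (a s) (kerPart (B.flip (b t)) (a s) a') = 0 := by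
    simp [kerPart, apply_deriv_eq_zero_of_eventually_const hB ha hnull, haa]
  have hη₂ : B (a s) (kerPart (B (a s)) (b t) b') = 0 := apply_kerPart (B (a s)) hab b'
  have hιη : ι (ω (kerPart (B.flip (b t)) (a s) a') (kerPart (B (a s)) (b t) b')) = 0 := by
    rw [hι, hη₁, hη₂, zero_smul, zero_smul, sub_zero]
  have ha0 : a s ≠ 0 := fun h => hab (by rw [h, map_zero, zero_apply])
  have hιab : ι (ω (a s) (b t)) ≠ 0 := by
    simp [hι, haa, hab, ha0]
  rw [pds_pdt_gaussBivector B ω ha hb hab, smul_add_smul_eq_zero_iff_of_map ι hιη hιab]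
  simp [hab, and_comm]

end Wedge

/-- `B4` as a continuous bilinear map. -/
def B4L : (Fin 4 → ℝ) →L[ℝ] (Fin 4 → ℝ) →L[ℝ] ℝ :=
  IsBilinearMap.toContinuousBilinearMap (f := B4)
    { add_left := fun _ _ _ => by simp only [B4, Pi.add_apply]; ring
      smul_left := fun _ _ _ => by simp only [B4, Pi.smul_apply, smul_eq_mul]; ring
      add_right := fun _ _ _ => by simp only [B4, Pi.add_apply]; ring
      smul_right := fun _ _ _ => by simp only [B4, Pi.smul_apply, smul_eq_mul]; ring }

/-- `wedge` as a continuous bilinear map. -/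
def wedgeL : (Fin 4 → ℝ) →L[ℝ] (Fin 4 → ℝ) →L[ℝ] (Fin 4 → Fin 4 → ℝ) :=
  IsBilinearMap.toContinuousBilinearMap (f := wedge)
    { add_left := fun _ _ _ => by ext; simp only [wedge, Pi.add_apply]; ring
      smul_left := fun _ _ _ => by ext; simp only [wedge, Pi.smul_apply, smul_eq_mul]; ring
      add_right := fun _ _ _ => by ext; simp only [wedge, Pi.add_apply]; ring
      smul_right := fun _ _ _ => by ext; simp only [wedge, Pi.smul_apply, smul_eq_mul]; ring }

lemma B4_comm (v w : Fin 4 → ℝ) : B4 v w = B4 w v := by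
  simp only [B4, mul_comm]

lemma hasInteriorProducts_wedgeL : HasInteriorProducts wedgeL := by
  intro φ
  refine ⟨∑ i, φ (Pi.single i 1) • LinearMap.proj i, fun v w => ?_⟩
  have hφ (x : Fin 4 → ℝ) : φ x = ∑ i, φ (Pi.single i 1) * x i := by
    conv_lhs => rw [pi_eq_sum_univ' x, map_sum]
    simp [Pi.single, mul_comm]
  ext j
  have hwedge : (∑ i, φ (Pi.single i 1) • wedge v w i) j = φ v * w j - φ w * v j := by
    simp only [hφ v, hφ w, Finset.sum_apply, Pi.smul_apply, smul_eq_mul, wedge, Finset.sum_mul,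
      ← Finset.sum_sub_distrib]
    exact Finset.sum_congr rfl fun i _ => by ring
  simpa [wedgeL] using hwedge

lemma eta1_eq_kerPart (α β : ℝ → Fin 4 → ℝ) (s t : ℝ) :
    eta1 α β s t = kerPart (B4L.flip (deriv β t)) (deriv α s) (deriv (deriv α) s) :=
  rfl

lemma eta2_eq_kerPart (α β : ℝ → Fin 4 → ℝ) (s t : ℝ) :
    eta2 α β s t = kerPart (B4L (deriv α s)) (deriv β t) (deriv (deriv β) t) := by
  rw [eta2, B4_comm (deriv (deriv β) t)]
  rfl

lemma hasDerivAt_deriv_of_contDiffOn {E : Type*} [NormedAddCommGroup E] [NormedSpace ℝ E]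
    {I : Set ℝ} (hI : IsOpen I) {f : ℝ → E} (hf : ContDiffOn ℝ 2 f I) {x : ℝ} (hx : x ∈ I) :
    HasDerivAt (deriv f) (deriv (deriv f) x) x :=
  (((hf.deriv_of_isOpen hI one_add_one_eq_two.le).differentiableOn one_ne_zero).differentiableAt
    (hI.mem_nhds hx)).hasDerivAt

/-- Characterization of harmonic Gauss map: at each point, `∂²ν/∂s∂t = 0` iff
both `B(η₁,η₂) = 0` (vanishing Gaussian curvature) and `η₁ ∧ η₂ = 0` (vanishing
normal curvature). -/
theorem harmonic_gaussMap_iff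
    (I₁ I₂ : Set ℝ) (hI₁ : IsOpen I₁) (hI₂ : IsOpen I₂)
    (hI₁' : I₁.OrdConnected) (hI₂' : I₂.OrdConnected)
    (α β : ℝ → Fin 4 → ℝ)
    (hα : ContDiffOn ℝ (⊤ : ℕ∞) α I₁) (hβ : ContDiffOn ℝ (⊤ : ℕ∞) β I₂)
    (hαnull : ∀ s ∈ I₁, B4 (deriv α s) (deriv α s) = 0)
    (hβnull : ∀ t ∈ I₂, B4 (deriv β t) (deriv β t) = 0)
    (hneg : ∀ s ∈ I₁, ∀ t ∈ I₂, B4 (deriv α s) (deriv β t) < 0)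
    :
    ∀ s ∈ I₁, ∀ t ∈ I₂,
      (pds (pdt (gaussMap α β)) s t = 0 ↔
        (B4 (eta1 α β s t) (eta2 α β s t) = 0 ∧
          wedge (eta1 α β s t) (eta2 α β s t) = 0)) := by
  intro s hs t ht
  have ha := hasDerivAt_deriv_of_contDiffOn hI₁ (hα.of_le (by norm_cast)) hs
  have hb := hasDerivAt_deriv_of_contDiffOn hI₂ (hβ.of_le (by norm_cast)) ht
  have hnull : ∀ᶠ u in 𝓝 s, B4 (deriv α u) (deriv α u) = 0 :=
    (hI₁.eventually_mem hs).mono hαnull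
  rw [eta1_eq_kerPart, eta2_eq_kerPart]
  exact harmonic_gaussMap_iff_general (B := B4L) B4_comm hasInteriorProducts_wedgeL ha hb hnull
    (hneg s hs t ht).ne
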